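/- For all annotation-free extended Plebeia nodes n₁ and n₂ that both satisfy the shape invariants (SI1), (SI2), and (SI6), if n₁ ≠ n₂ and MH(n₁) = MH(n₂), then either there exist byte strings x₁ ≠ x₂ with first222(B'(x₁)) = first222(B'(x₂)), or there exists a byte string y with first222(B'(y)) equal to the 28-byte all-zero string. -/

import Mathlib

/-- A side is `L` or `R`. -/
inductive Side : Type
  | L | R
deriving DecidableEq, Repr

/-- A key is a list of sides. -/
abbrev Key := List Side

/-- The strict order `L < R` on sides. -/
def Side.lt : Side → Side → Prop := fun a b => a = Side.L ∧ b = Side.R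

/-- The strict lexicographic order on keys induced by `L < R`. -/
def keyLt : Key → Key → Prop := List.Lex Side.lt

/-- A list of keys is prefix-free: for any two distinct keys in it,
neither is a prefix of the other. -/
def PrefixFreeList (ks : List Key) : Prop :=
  List.Pairwise (fun a b => ¬ a <+: b ∧ ¬ b <+: a) ks

/-- A set of keys is prefix-free. -/
def PrefixFreeSet (S : Set Key) : Prop :=
  ∀ a ∈ S, ∀ b ∈ S, a ≠ b → ¬ a <+: b

/-- A list of keys is strictly increasing in the lexicographic order. -/
def SortedKeys (ks : List Key) : Prop := List.Pairwise keyLt ks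

/-- Key list of an association list is prefix-free and strictly increasing. -/
def GoodKeyList (ks : List Key) : Prop := PrefixFreeList ks ∧ SortedKeys ks

/-- Prepend the key `s` to the key of every entry. -/
def prependAll {β : Type _} (s : Key) (l : List (Key × β)) : List (Key × β) :=
  l.map (fun e => (s ++ e.1, e.2))

/-- `lookup l k` is `some` of the value of the first entry of `l` with key `k`. -/
def lookupA {β : Type _} (l : List (Key × β)) (k : Key) : Option β :=
  (l.find? (fun e => decide (e.1 = k))).map Prod.snd
/-- Annotation-free extended Plebeia nodes over a value type `α`. -/
inductive ANode (α : Type) : Type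
  | leaf : α → ANode α
  | branch : ANode α → ANode α → ANode α
  | extender : Key → ANode α → ANode α
  | bud : Option (ANode α) → ANode α

variable {α : Type}

def ANode.isExtender : ANode α → Prop
  | .extender _ _ => True
  | _ => False

def ANode.isBud : ANode α → Prop
  | .bud _ => True
  | _ => False

def ANode.isLeaf : ANode α → Prop
  | .leaf _ => True
  | _ => False

/-- Shape invariants (SI1), (SI2), (SI6) at every subtree. -/
def ANode.shapeInv : ANode α → Prop
  | .leaf _ => True
  | .branch l r => l.shapeInv ∧ r.shapeInv
  | .extender s n => (¬ n.isExtender) ∧ s ≠ [] ∧ n.shapeInv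
  | .bud none => True
  | .bud (some n) => (¬ n.isBud) ∧ (¬ n.isLeaf) ∧ n.shapeInv
/-- Byte strings: lists of 8-bit bytes. -/
abbrev Bytes := List UInt8

/-- Replace the last two bits of the last byte of `b` by the 2-bit tag `t`. -/
def setLast2 (b : Bytes) (t : UInt8) : Bytes :=
  match b.getLast? with
  | none => []
  | some x => b.dropLast ++ [(x &&& 0xfc) ||| (t &&& 0x3)]

/-- `first222 b` sets the last two bits of `b` to 0. -/
def first222 (b : Bytes) : Bytes := setLast2 b 0

/-- `hash222 B' s t`: the 28-byte string whose first 222 bits agree with those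
of `B' s` and whose last two bits are the 2-bit tag `t`. -/
def hash222 (B' : Bytes → Bytes) (s : Bytes) (t : UInt8) : Bytes :=
  setLast2 (B' s) t

/-- The Merkle hash of an annotation-free extended Plebeia node, relative to
the hash `B'`, the key encoding `keyBytes` and the length encoding `enc`. -/
def MH (B' : Bytes → Bytes) (keyBytes : Key → Bytes) (enc : ℕ → Bytes) :
    ANode Bytes → Bytes
  | .leaf v => hash222 B' v 2           -- tag 10
  | .branch l r =>
      hash222 B'
        (MH B' keyBytes enc l ++ MH B' keyBytes enc r ++
          enc (MH B' keyBytes enc r).length) 0   -- tag 00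
  | .extender s n => MH B' keyBytes enc n ++ keyBytes s
  | .bud none => List.replicate 28 0
  | .bud (some n) => hash222 B' (MH B' keyBytes enc n) 3   -- tag 11

theorem setLast2_length (b : Bytes) (t : UInt8) : (setLast2 b t).length = b.length := by
  rcases List.eq_nil_or_concat b with rfl | ⟨l, x, rfl⟩ <;> simp [setLast2]

theorem first222_setLast2 (b : Bytes) (t : UInt8) :
    first222 (setLast2 b t) = first222 b := by
  rcases List.eq_nil_or_concat b with rfl | ⟨l, x, rfl⟩
  · simp [setLast2, first222]
  · simp only [setLast2, first222, List.concat_eq_append, List.getLast?_concat, List.dropLast_concat]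
    congr 2
    apply UInt8.toBitVec_inj.1
    simp
    ext i hi
    interval_cases i <;> simp

theorem setLast2_tag (b c : Bytes) (hb : b ≠ []) (hc : c ≠ []) (t u : UInt8)
    (h : setLast2 b t = setLast2 c u) : t &&& 3 = u &&& 3 := by
  rcases List.eq_nil_or_concat b with rfl | ⟨l, x, rfl⟩
  · exact absurd rfl hb
  rcases List.eq_nil_or_concat c with rfl | ⟨m, y, rfl⟩
  · exact absurd rfl hc
  simp only [setLast2, List.concat_eq_append, List.getLast?_concat, List.dropLast_concat] at h
  have h' := (List.append_inj' h rfl).2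
  simp only [List.cons.injEq, and_true] at h'
  have key : ∀ a s : UInt8, ((a &&& 0xfc) ||| (s &&& 3)) &&& 3 = s &&& 3 := by
    intro a s
    apply UInt8.toBitVec_inj.1
    simp
    ext i hi
    interval_cases i <;> simp
  rw [← key x t, h', key]

/-- A collision of `first222 ∘ B'` or a preimage of zero. -/
def Broken (B' : Bytes → Bytes) : Prop :=
  (∃ x₁ x₂ : Bytes, x₁ ≠ x₂ ∧ first222 (B' x₁) = first222 (B' x₂)) ∨
    (∃ y : Bytes, first222 (B' y) = List.replicate 28 0)

theorem hash222_inj (B' : Bytes → Bytes) (x y : Bytes) (t u : UInt8)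
    (h : hash222 B' x t = hash222 B' y u) : x = y ∨ Broken B' := by
  by_cases hxy : x = y
  · exact Or.inl hxy
  · refine Or.inr (Or.inl ⟨x, y, hxy, ?_⟩)
    rw [← first222_setLast2 (B' x) t, ← first222_setLast2 (B' y) u]
    exact congrArg first222 h

theorem hash222_zero (B' : Bytes → Bytes) (x : Bytes) (t : UInt8)
    (h : hash222 B' x t = List.replicate 28 0) : Broken B' := by
  refine Or.inr ⟨x, ?_⟩
  rw [← first222_setLast2 (B' x) t]
  exact (congrArg first222 h).trans (by decide)

theorem hash222_tag (B' : Bytes → Bytes) (hB : ∀ s : Bytes, (B' s).length = 28)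
    (x y : Bytes) (t u : UInt8) (h : hash222 B' x t = hash222 B' y u) :
    t &&& 3 = u &&& 3 := by
  have hne : ∀ s, B' s ≠ [] := fun s hs => by simpa [hs] using hB s
  exact setLast2_tag _ _ (hne x) (hne y) t u h

section
variable (B' : Bytes → Bytes) (keyBytes : Key → Bytes) (enc : ℕ → Bytes)

theorem MH_length (hB : ∀ s : Bytes, (B' s).length = 28) (n : ANode Bytes)
    (hn : ¬ n.isExtender) : (MH B' keyBytes enc n).length = 28 := by
  match n with
  | .leaf v => simp [MH, hash222, setLast2_length, hB]
  | .branch l r => simp [MH, hash222, setLast2_length, hB]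
  | .extender s n => exact absurd trivial hn
  | .bud none => simp [MH]
  | .bud (some n) => simp [MH, hash222, setLast2_length, hB]

theorem MH_ext_ne (hB : ∀ s : Bytes, (B' s).length = 28)
    (hkne : ∀ s : Key, s ≠ [] → keyBytes s ≠ []) (s : Key) (n m : ANode Bytes)
    (h : (ANode.extender s n).shapeInv) (hm : ¬ m.isExtender) :
    MH B' keyBytes enc (.extender s n) ≠ MH B' keyBytes enc m := by
  intro e
  simp only [ANode.shapeInv] at h
  have e' := congrArg List.length e
  rw [MH_length B' keyBytes enc hB m hm] at e'
  simp only [MH, List.length_append, MH_length B' keyBytes enc hB n h.1] at e'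
  have := List.length_pos_iff.2 (hkne s h.2.1)
  omega

theorem MH_main (hB : ∀ s : Bytes, (B' s).length = 28)
    (hkinj : Function.Injective keyBytes)
    (hkne : ∀ s : Key, s ≠ [] → keyBytes s ≠ [])
    (henc : Function.Injective
      (fun p : Bytes × Bytes => p.1 ++ p.2 ++ enc p.2.length))
    (n₁ n₂ : ANode Bytes) (h₁ : n₁.shapeInv) (h₂ : n₂.shapeInv)
    (e : MH B' keyBytes enc n₁ = MH B' keyBytes enc n₂) : n₁ = n₂ ∨ Broken B' := by
  have IH := fun m₁ m₂ (_ : sizeOf m₁ < sizeOf n₁) =>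
    MH_main hB hkinj hkne henc m₁ m₂
  match n₁, n₂ with
  | .extender s n, .extender t m =>
    simp only [ANode.shapeInv] at h₁ h₂
    simp only [MH] at e
    obtain ⟨e1, e2⟩ := List.append_inj e
      ((MH_length B' keyBytes enc hB n h₁.1).trans (MH_length B' keyBytes enc hB m h₂.1).symm)
    rcases IH n m (by simp) h₁.2.2 h₂.2.2 e1 with rfl | hb
    · exact Or.inl (by rw [hkinj e2])
    · exact Or.inr hb
  | .extender s n, .leaf v => exact absurd e (MH_ext_ne B' keyBytes enc hB hkne s n _ h₁ id)
  | .extender s n, .branch _ _ => exact absurd e (MH_ext_ne B' keyBytes enc hB hkne s n _ h₁ id)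
  | .extender s n, .bud _ => exact absurd e (MH_ext_ne B' keyBytes enc hB hkne s n _ h₁ id)
  | .leaf v, .extender s n => exact absurd e.symm (MH_ext_ne B' keyBytes enc hB hkne s n _ h₂ id)
  | .branch _ _, .extender s n =>
    exact absurd e.symm (MH_ext_ne B' keyBytes enc hB hkne s n _ h₂ id)
  | .bud _, .extender s n => exact absurd e.symm (MH_ext_ne B' keyBytes enc hB hkne s n _ h₂ id)
  | .leaf v, .leaf w =>
    simp only [MH] at e
    exact (hash222_inj B' _ _ _ _ e).imp_left (fun h => by rw [h])
  | .branch l r, .branch l' r' =>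
    simp only [ANode.shapeInv] at h₁ h₂
    simp only [MH] at e
    rcases hash222_inj B' _ _ _ _ e with h | hb
    · have hp := @henc (_, _) (_, _) h
      rw [Prod.mk.injEq] at hp
      rcases IH l l' (by simp; omega) h₁.1 h₂.1 hp.1 with rfl | hb
      · rcases IH r r' (by simp) h₁.2 h₂.2 hp.2 with rfl | hb
        · exact Or.inl rfl
        · exact Or.inr hb
      · exact Or.inr hb
    · exact Or.inr hb
  | .bud (some n), .bud (some m) =>
    simp only [ANode.shapeInv] at h₁ h₂
    simp only [MH] at e
    rcases hash222_inj B' _ _ _ _ e with h | hb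
    · rcases IH n m (by simp; omega) h₁.2.2 h₂.2.2 h with rfl | hb
      · exact Or.inl rfl
      · exact Or.inr hb
    · exact Or.inr hb
  | .bud none, .bud none => exact Or.inl rfl
  | .bud none, .leaf _ => simp only [MH] at e; exact Or.inr (hash222_zero B' _ _ e.symm)
  | .bud none, .branch _ _ => simp only [MH] at e; exact Or.inr (hash222_zero B' _ _ e.symm)
  | .bud none, .bud (some _) => simp only [MH] at e; exact Or.inr (hash222_zero B' _ _ e.symm)
  | .leaf _, .bud none => simp only [MH] at e; exact Or.inr (hash222_zero B' _ _ e)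
  | .branch _ _, .bud none => simp only [MH] at e; exact Or.inr (hash222_zero B' _ _ e)
  | .bud (some _), .bud none => simp only [MH] at e; exact Or.inr (hash222_zero B' _ _ e)
  | .leaf _, .branch _ _ =>
    simp only [MH] at e; exact absurd (hash222_tag B' hB _ _ _ _ e) (by decide)
  | .leaf _, .bud (some _) =>
    simp only [MH] at e; exact absurd (hash222_tag B' hB _ _ _ _ e) (by decide)
  | .branch _ _, .leaf _ =>
    simp only [MH] at e; exact absurd (hash222_tag B' hB _ _ _ _ e) (by decide)
  | .branch _ _, .bud (some _) =>
    simp only [MH] at e; exact absurd (hash222_tag B' hB _ _ _ _ e) (by decide)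
  | .bud (some _), .leaf _ =>
    simp only [MH] at e; exact absurd (hash222_tag B' hB _ _ _ _ e) (by decide)
  | .bud (some _), .branch _ _ =>
    simp only [MH] at e; exact absurd (hash222_tag B' hB _ _ _ _ e) (by decide)
termination_by sizeOf n₁

end

/-- from any collision of the Merkle hash on shape-invariant
nodes one gets either a collision of `first222 ∘ B'` or a preimage of the
28-byte all-zero string under `first222 ∘ B'`. -/
theorem stmt15 (B' : Bytes → Bytes) (hB : ∀ s : Bytes, (B' s).length = 28)
    (keyBytes : Key → Bytes) (hkinj : Function.Injective keyBytes)
    (hkne : ∀ s : Key, s ≠ [] → keyBytes s ≠ [])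
    (enc : ℕ → Bytes)
    (henc : Function.Injective
      (fun p : Bytes × Bytes => p.1 ++ p.2 ++ enc p.2.length))
    (n₁ n₂ : ANode Bytes) (h₁ : n₁.shapeInv) (h₂ : n₂.shapeInv)
    (hne : n₁ ≠ n₂) (hmh : MH B' keyBytes enc n₁ = MH B' keyBytes enc n₂) :
    (∃ x₁ x₂ : Bytes, x₁ ≠ x₂ ∧ first222 (B' x₁) = first222 (B' x₂)) ∨
    (∃ y : Bytes, first222 (B' y) = List.replicate 28 0) := by
  exact (MH_main B' keyBytes enc hB hkinj hkne henc n₁ n₂ h₁ h₂ hmh).resolve_left hne
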